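/- arXiv:1907.00573 — 3 statements merged into one kernel-verified Lean document; each statement's English description precedes it below -/
import Mathlib

section
/- Let A be a unital C*-algebra with a tracial state τ. Let x₁, x₂ ∈ A be selfadjoint, let α > 0, and let p ∈ A be a projection with Re τ(p) > 0 such that ‖[x₁, p]‖₂ + ‖[x₂, p]‖₂ ≥ α ‖p‖₂. Then ‖[x₁, p]‖ + ‖[x₂, p]‖ ≥ α/√2, where ‖·‖ is the C*-norm. -/
/-- The trace 2-norm `‖x‖₂ = √(Re τ(x*x))` associated with a tracial state `τ`. -/
noncomputable def traceNorm2 {A : Type*} [NormedRing A] [StarRing A] [NormedAlgebra ℂ A]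
    (τ : A →ₗ[ℂ] ℂ) (x : A) : ℝ :=
  Real.sqrt (τ (star x * x)).re

/-!
Let `c = x p - p x` with `p` a projection. Commuting with `x` is a derivation, so `p = p²` gives
`c = c p + p c`: the corners `p c p` and `(1 - p) c (1 - p)` vanish. The trace property then turns
this into `‖c‖₂² = ‖c p‖₂² + ‖c* p‖₂²`, and each summand is at most `‖c‖² ‖p‖₂²`. Hence
`‖c‖₂ ≤ √2 ‖c‖ ‖p‖₂`; sum this over `x₁, x₂` and divide by `‖p‖₂ > 0`.
-/

theorem commutator_eq_mul_add_mul {R : Type*} [NonUnitalRing R] {p : R} (hp : IsIdempotentElem p)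
    (x : R) : x * p - p * x = (x * p - p * x) * p + p * (x * p - p * x) := by
  have hpp : p * p = p := hp
  have hppx : p * (p * x) = p * x := by rw [← mul_assoc, hpp]
  simp only [sub_mul, mul_sub, mul_assoc, hpp, hppx]
  abel

section TraceNorm

variable {A : Type*} [NormedRing A] [StarRing A] [NormedAlgebra ℂ A] {τ : A →ₗ[ℂ] ℂ}

theorem traceNorm2_nonneg (x : A) : 0 ≤ traceNorm2 τ x :=
  Real.sqrt_nonneg _

theorem traceNorm2_sq (hτpos : ∀ x : A, 0 ≤ (τ (star x * x)).re) (x : A) :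
    traceNorm2 τ x ^ 2 = (τ (star x * x)).re :=
  Real.sq_sqrt (hτpos x)

theorem traceNorm2_pos_of_isStarProjection {p : A} (hp : IsStarProjection p) (hpos : 0 < (τ p).re) :
    0 < traceNorm2 τ p := by
  rwa [traceNorm2, Real.sqrt_pos, hp.isSelfAdjoint.star_eq, hp.isIdempotentElem.eq]

theorem traceNorm2_sq_eq_add_of_eq_mul_add_mul
    (hτpos : ∀ x : A, 0 ≤ (τ (star x * x)).re) (hτtr : ∀ x y : A, τ (x * y) = τ (y * x))
    {p c : A} (hp : IsStarProjection p) (hc : c = c * p + p * c) :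
    traceNorm2 τ c ^ 2 = traceNorm2 τ (c * p) ^ 2 + traceNorm2 τ (star c * p) ^ 2 := by
  have hpp : p * p = p := hp.isIdempotentElem
  have hps : star p = p := hp.isSelfAdjoint
  have right_part : τ (star c * (c * p)) = τ (star (c * p) * (c * p)) := by
    calc τ (star c * (c * p)) = τ (star c * (c * p) * p) := by simp only [mul_assoc, hpp]
      _ = τ (star (c * p) * (c * p)) := by rw [hτtr, star_mul, hps, mul_assoc]
  have left_part : τ (star c * (p * c)) = τ (star (star c * p) * (star c * p)) := by
    calc τ (star c * (p * c)) = τ (star c * p * (p * c)) := by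
          rw [mul_assoc, ← mul_assoc p p c, hpp]
      _ = τ (star (star c * p) * (star c * p)) := by rw [hτtr, star_mul, star_star, hps]
  have split : τ (star c * c) = τ (star c * (c * p)) + τ (star c * (p * c)) := by
    rw [← map_add, ← mul_add, ← hc]
  simp only [traceNorm2_sq hτpos]
  rw [split, right_part, left_part, Complex.add_re]

end TraceNorm

section OpNormBound

variable {A : Type*} [CStarAlgebra A] {τ : A →ₗ[ℂ] ℂ}

theorem traceNorm2_mul_le (hτpos : ∀ x : A, 0 ≤ (τ (star x * x)).re) (a b : A) :
    traceNorm2 τ (a * b) ≤ ‖a‖ * traceNorm2 τ b := by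
  let : PartialOrder A := CStarAlgebra.spectralOrder A
  have : StarOrderedRing A := CStarAlgebra.spectralOrderedRing A
  have conj_le : star (a * b) * (a * b) ≤ ‖star a * a‖ • (star b * b) := by
    simpa only [star_mul, mul_assoc] using
      CStarAlgebra.star_left_conjugate_le_norm_smul (a := b) (b := star a * a)
  obtain ⟨y, hy⟩ := CStarAlgebra.nonneg_iff_eq_star_mul_self.mp (sub_nonneg.mpr conj_le)
  have trace_le : (τ (star (a * b) * (a * b))).re ≤ ‖a‖ ^ 2 * (τ (star b * b)).re := by
    have hy_nonneg := hτpos y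
    rw [← hy, map_sub, ← Complex.coe_smul, map_smul, Complex.sub_re, smul_eq_mul,
      Complex.re_ofReal_mul, CStarRing.norm_star_mul_self] at hy_nonneg
    linarith
  calc traceNorm2 τ (a * b) ≤ √(‖a‖ ^ 2 * (τ (star b * b)).re) := Real.sqrt_le_sqrt trace_le
    _ = ‖a‖ * traceNorm2 τ b := by
      rw [Real.sqrt_mul (sq_nonneg _), Real.sqrt_sq (norm_nonneg a), traceNorm2]

theorem traceNorm2_commutator_le (hτpos : ∀ x : A, 0 ≤ (τ (star x * x)).re)
    (hτtr : ∀ x y : A, τ (x * y) = τ (y * x)) {p : A} (hp : IsStarProjection p) (x : A) :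
    traceNorm2 τ (x * p - p * x) ≤ √2 * ‖x * p - p * x‖ * traceNorm2 τ p := by
  set c := x * p - p * x
  have hcp : traceNorm2 τ (c * p) ≤ ‖c‖ * traceNorm2 τ p := traceNorm2_mul_le hτpos c p
  have hcp_star : traceNorm2 τ (star c * p) ≤ ‖c‖ * traceNorm2 τ p := by
    simpa only [norm_star] using traceNorm2_mul_le hτpos (star c) p
  have sq_le : traceNorm2 τ c ^ 2 ≤ (√2 * ‖c‖ * traceNorm2 τ p) ^ 2 := by
    calc traceNorm2 τ c ^ 2 = traceNorm2 τ (c * p) ^ 2 + traceNorm2 τ (star c * p) ^ 2 :=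
          traceNorm2_sq_eq_add_of_eq_mul_add_mul hτpos hτtr hp
            (commutator_eq_mul_add_mul hp.isIdempotentElem x)
      _ ≤ (‖c‖ * traceNorm2 τ p) ^ 2 + (‖c‖ * traceNorm2 τ p) ^ 2 := by
          gcongr <;> exact traceNorm2_nonneg _
      _ = (√2 * ‖c‖ * traceNorm2 τ p) ^ 2 := by
          rw [mul_assoc, mul_pow √2, Real.sq_sqrt zero_le_two, two_mul]
  have bound_nonneg : 0 ≤ √2 * ‖c‖ * traceNorm2 τ p :=
    mul_nonneg (by positivity) (traceNorm2_nonneg p)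
  exact (sq_le_sq₀ (traceNorm2_nonneg c) bound_nonneg).mp sq_le

theorem opNorm_commutator_ge_of_traceNorm_commutator_ge_selfAdjoint_general
    (hτpos : ∀ x : A, 0 ≤ (τ (star x * x)).re) (hτtr : ∀ x y : A, τ (x * y) = τ (y * x))
    (x₁ x₂ : A) (α : ℝ) {p : A} (hp : IsStarProjection p) (hp_pos : 0 < (τ p).re)
    (h : α * traceNorm2 τ p ≤
      traceNorm2 τ (x₁ * p - p * x₁) + traceNorm2 τ (x₂ * p - p * x₂)) :
    α / √2 ≤ ‖x₁ * p - p * x₁‖ + ‖x₂ * p - p * x₂‖ := by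
  rw [div_le_iff₀ (by positivity)]
  refine le_of_mul_le_mul_right ?_ (traceNorm2_pos_of_isStarProjection hp hp_pos)
  calc α * traceNorm2 τ p
      ≤ traceNorm2 τ (x₁ * p - p * x₁) + traceNorm2 τ (x₂ * p - p * x₂) := h
    _ ≤ √2 * ‖x₁ * p - p * x₁‖ * traceNorm2 τ p + √2 * ‖x₂ * p - p * x₂‖ * traceNorm2 τ p :=
        add_le_add (traceNorm2_commutator_le hτpos hτtr hp x₁)
          (traceNorm2_commutator_le hτpos hτtr hp x₂)
    _ = (‖x₁ * p - p * x₁‖ + ‖x₂ * p - p * x₂‖) * √2 * traceNorm2 τ p := by ring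

end OpNormBound

/-- For selfadjoint `x₁, x₂` and a projection `p` of positive trace with
`‖[x₁,p]‖₂ + ‖[x₂,p]‖₂ ≥ α‖p‖₂`, one has `‖[x₁,p]‖ + ‖[x₂,p]‖ ≥ α/√2`. -/
theorem opNorm_commutator_ge_of_traceNorm_commutator_ge_selfAdjoint
    {A : Type*} [NormedRing A] [StarRing A] [CStarRing A] [CompleteSpace A]
    [NormedAlgebra ℂ A] [StarModule ℂ A]
    (τ : A →ₗ[ℂ] ℂ)
    (hτ1 : τ 1 = 1)
    (hτpos : ∀ x : A, 0 ≤ (τ (star x * x)).re)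
    (hτreal : ∀ x : A, (τ (star x * x)).im = 0)
    (hτtr : ∀ x y : A, τ (x * y) = τ (y * x))
    (x₁ x₂ : A) (hx₁ : star x₁ = x₁) (hx₂ : star x₂ = x₂)
    (α : ℝ) (hα : 0 < α)
    (p : A) (hp_sa : star p = p) (hp_idem : p * p = p) (hp_pos : 0 < (τ p).re)
    (h : α * traceNorm2 τ p ≤
      traceNorm2 τ (x₁ * p - p * x₁) + traceNorm2 τ (x₂ * p - p * x₂)) :
    α / Real.sqrt 2 ≤ ‖x₁ * p - p * x₁‖ + ‖x₂ * p - p * x₂‖ := by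
  let : CStarAlgebra A := {}
  exact opNorm_commutator_ge_of_traceNorm_commutator_ge_selfAdjoint_general hτpos hτtr x₁ x₂ α
    ⟨hp_idem, hp_sa⟩ hp_pos h
end

section
/- Let A be a unital C*-algebra with a faithful tracial state τ and let x ∈ A. The following are equivalent: (i) x lies in the C*-norm closure of Red(A); (ii) there exists a sequence {p_n}_{n=1}^∞ of projections in A with 0 < Re τ(p_n) ≤ 1/2 for all n and lim_{n→∞} ‖[x, p_n]‖ = 0; (iii) there exists a sequence {p_n}_{n=1}^∞ of projections in A with 0 < Re τ(p_n) ≤ 1/2 for all n such that lim_{n→∞} ‖[y, p_n]‖ = 0 for every y ∈ C*(x). -/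
open Filter Topology

/-- The set of reducible elements of a unital *-ring: those commuting with some
nontrivial projection. -/
def RedSet (A : Type*) [Ring A] [StarRing A] : Set A :=
  {x : A | ∃ p : A, star p = p ∧ p * p = p ∧ p ≠ 0 ∧ p ≠ 1 ∧ x * p = p * x}

/-!
The pinching of `x` by a projection `p` commutes with `p`, and its difference from `x` is
`⁅x, p⁆ * (2 * p - 1)`, where `2 * p - 1` is unitary; so its distance from `x` is `‖⁅x, p⁆‖`.
Hence `x` is a limit of reducible elements iff it almost commutes with nontrivial projections.
Replacing `p` by `1 - p` changes the commutator only by a sign, and one of the two has trace at most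
`1 / 2`. Finally, the elements asymptotically commuting with a bounded sequence of self-adjoint
elements form a closed star subalgebra, which contains `C*(x)` as soon as it contains `x`.
-/

theorem norm_commutator_le {A : Type*} [NonUnitalSeminormedRing A] (a b : A) :
    ‖⁅a, b⁆‖ ≤ 2 * ‖a‖ * ‖b‖ := by
  calc ‖a * b - b * a‖ ≤ ‖a * b‖ + ‖b * a‖ := norm_sub_le _ _
    _ ≤ ‖a‖ * ‖b‖ + ‖b‖ * ‖a‖ := add_le_add (norm_mul_le _ _) (norm_mul_le _ _)
    _ = 2 * ‖a‖ * ‖b‖ := by ring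

section Pinching

variable {A : Type*} [Ring A]

/-- The pinching of `x` by an idempotent `p`: the block-diagonal part of `x` with respect to the
decomposition `1 = p + (1 - p)`. -/
def pinching (p x : A) : A :=
  p * x * p + (1 - p) * x * (1 - p)

theorem commute_pinching {p : A} (hp : IsIdempotentElem p) (x : A) : Commute (pinching p x) p := by
  have hleft : p * pinching p x = p * x * p := by
    simp only [pinching, mul_add, ← mul_assoc, hp.eq, hp.mul_one_sub_self, zero_mul, add_zero]
  have hright : pinching p x * p = p * x * p := by
    simp only [pinching, add_mul, mul_assoc, hp.eq, hp.one_sub_mul_self, mul_zero, add_zero]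
  exact hright.trans hleft.symm

theorem sub_pinching_eq_commutator_mul {p : A} (hp : IsIdempotentElem p) (x : A) :
    x - pinching p x = ⁅x, p⁆ * (2 * p - 1) := by
  have hxp : x * p * p = x * p := by rw [mul_assoc, hp.eq]
  simp only [pinching, Ring.lie_def, two_mul, mul_sub, sub_mul, mul_add, mul_one, one_mul, hxp]
  abel

end Pinching

theorem norm_sub_pinching {A : Type*} [NormedRing A] [StarRing A] [CStarRing A] {p : A}
    (hp : IsStarProjection p) (x : A) : ‖x - pinching p x‖ = ‖⁅x, p⁆‖ := by
  rw [sub_pinching_eq_commutator_mul hp.isIdempotentElem,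
    CStarRing.norm_mul_mem_unitary _ hp.two_mul_sub_one_mem_unitary]

section Reducible

attribute [local instance 100] LieRing.ofAssociativeRing

theorem isStarProjection_iff_star_eq_and_mul_self_eq {A : Type*} [Mul A] [Star A] {p : A} :
    IsStarProjection p ↔ star p = p ∧ p * p = p :=
  isStarProjection_iff'.trans and_comm

theorem mem_redSet_iff {A : Type*} [Ring A] [StarRing A] {x : A} :
    x ∈ RedSet A ↔ ∃ p : A, IsStarProjection p ∧ p ≠ 0 ∧ p ≠ 1 ∧ Commute x p := by
  simp only [RedSet, Set.mem_ofPred_eq, isStarProjection_iff_star_eq_and_mul_self_eq, and_assoc,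
    commute_iff_eq]

theorem mem_closure_redSet_iff {A : Type*} [NormedRing A] [StarRing A] [CStarRing A] {x : A} :
    x ∈ closure (RedSet A) ↔
      ∀ ε > 0, ∃ p : A, IsStarProjection p ∧ p ≠ 0 ∧ p ≠ 1 ∧ ‖⁅x, p⁆‖ < ε := by
  simp only [Metric.mem_closure_iff, dist_eq_norm]
  refine ⟨fun h ε hε => ?_, fun h ε hε => ?_⟩
  · obtain ⟨y, hy, hxy⟩ := h (ε / 2) (half_pos hε)
    obtain ⟨p, hp, hp0, hp1, hyp⟩ := mem_redSet_iff.1 hy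
    refine ⟨p, hp, hp0, hp1, ?_⟩
    calc ‖⁅x, p⁆‖ = ‖⁅x - y, p⁆‖ := by rw [sub_lie, hyp.lie_eq, sub_zero]
      _ ≤ 2 * ‖x - y‖ * ‖p‖ := norm_commutator_le _ _
      _ ≤ 2 * ‖x - y‖ := mul_le_of_le_one_right (by positivity) hp.norm_le
      _ < ε := by linarith
  · obtain ⟨p, hp, hp0, hp1, hxp⟩ := h ε hε
    exact ⟨pinching p x,
      mem_redSet_iff.2 ⟨p, hp, hp0, hp1, commute_pinching hp.isIdempotentElem x⟩,
      (norm_sub_pinching hp x).trans_lt hxp⟩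

theorem re_pos_of_isStarProjection {A : Type*} [MulZeroClass A] [Star A] {τ : A → ℂ}
    (hτpos : ∀ x : A, 0 ≤ (τ (star x * x)).re) (hτreal : ∀ x : A, (τ (star x * x)).im = 0)
    (hτfaithful : ∀ x : A, τ (star x * x) = 0 → x = 0) {p : A} (hp : IsStarProjection p)
    (hp0 : p ≠ 0) : 0 < (τ p).re := by
  have hsq : star p * p = p := by rw [hp.isSelfAdjoint.star_eq, hp.isIdempotentElem.eq]
  have hre := hτpos p
  have him := hτreal p
  have hne := mt (hτfaithful p) hp0
  rw [hsq] at hre him hne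
  exact hre.lt_of_ne fun h => hne (Complex.ext h.symm him)

theorem exists_isStarProjection_le_half {A : Type*} [Ring A] [StarRing A] {t : A →+ ℝ}
    (ht1 : t 1 = 1) (htpos : ∀ p, IsStarProjection p → p ≠ 0 → 0 < t p) {p : A}
    (hp : IsStarProjection p) (hp0 : p ≠ 0) (hp1 : p ≠ 1) :
    ∃ q, IsStarProjection q ∧ 0 < t q ∧ t q ≤ 1 / 2 ∧ (q = p ∨ q = 1 - p) := by
  rcases le_total (t p) (1 / 2) with hle | hge
  · exact ⟨p, hp, htpos p hp hp0, hle, .inl rfl⟩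
  · refine ⟨1 - p, hp.one_sub, htpos _ hp.one_sub (sub_ne_zero.2 hp1.symm), ?_, .inr rfl⟩
    rw [map_sub, ht1]
    linarith

theorem mem_closure_redSet_iff_exists_le_half {A : Type*} [NormedRing A] [StarRing A]
    [CStarRing A] {t : A →+ ℝ} (ht1 : t 1 = 1)
    (htpos : ∀ p, IsStarProjection p → p ≠ 0 → 0 < t p) {x : A} :
    x ∈ closure (RedSet A) ↔
      ∀ ε > 0, ∃ p : A, IsStarProjection p ∧ 0 < t p ∧ t p ≤ 1 / 2 ∧ ‖⁅x, p⁆‖ < ε := by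
  rw [mem_closure_redSet_iff]
  refine forall₂_congr fun ε _ => ⟨?_, ?_⟩
  · rintro ⟨p, hp, hp0, hp1, hxp⟩
    obtain ⟨q, hq, hq0, hq_half, hqp⟩ := exists_isStarProjection_le_half ht1 htpos hp hp0 hp1
    refine ⟨q, hq, hq0, hq_half, ?_⟩
    rcases hqp with rfl | rfl
    · exact hxp
    · rwa [lie_sub, (Commute.one_right x).lie_eq, zero_sub, norm_neg]
  · rintro ⟨p, hp, hp0, hp_half, hxp⟩
    refine ⟨p, hp, ?_, ?_, hxp⟩ <;> rintro rfl
    · simp at hp0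
    · norm_num [ht1] at hp_half

end Reducible

section AsymptoticCommutant

attribute [local instance 100] LieRing.ofAssociativeRing

variable (R : Type*) {A ι : Type*} [CommSemiring R] [StarRing R]

/-- The asymptotic commutant of a family `p` of self-adjoint elements along a filter `l`: the
elements whose commutators with `p i` tend to `0`. -/
def asymptoticCommutant [Ring A] [StarRing A] [Algebra R A] [StarModule R A]
    [TopologicalSpace A] [IsTopologicalRing A] [ContinuousStar A]
    (l : Filter ι) (p : ι → A) (hp : ∀ i, IsSelfAdjoint (p i)) : StarSubalgebra R A where
  carrier := {y | Tendsto (fun i => ⁅y, p i⁆) l (𝓝 0)}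
  mul_mem' {a b} ha hb := by
    have leibniz (i : ι) : ⁅a * b, p i⁆ = ⁅a, p i⁆ * b + a * ⁅b, p i⁆ := by
      simp only [Ring.lie_def]
      noncomm_ring
    simpa [leibniz] using (Tendsto.mul_const b ha).add (Tendsto.const_mul a hb)
  add_mem' {a b} ha hb := by
    simpa [add_lie] using Tendsto.add ha hb
  algebraMap_mem' r := by
    simp [Ring.lie_def, Algebra.commutes r, tendsto_const_nhds]
  star_mem' {a} ha := by
    have star_commutator (i : ι) : ⁅star a, p i⁆ = -star ⁅a, p i⁆ := by
      simp [Ring.lie_def, (hp i).star_eq]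
    simpa [star_commutator] using (Tendsto.star ha).neg

theorem isClosed_asymptoticCommutant [SeminormedRing A] [StarRing A] [ContinuousStar A]
    [Algebra R A] [StarModule R A] (l : Filter ι) {p : ι → A} (hp : ∀ i, IsSelfAdjoint (p i))
    (hbdd : Bornology.IsBounded (Set.range p)) :
    IsClosed (asymptoticCommutant R l p hp : Set A) := by
  obtain ⟨C, hC⟩ := hbdd.exists_norm_le
  have lipschitz (i : ι) : LipschitzWith (2 * C).toNNReal fun y : A => ⁅y, p i⁆ :=
    .of_dist_le' fun y z => by
      rw [dist_eq_norm, dist_eq_norm, ← sub_lie]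
      calc ‖⁅y - z, p i⁆‖ ≤ 2 * ‖y - z‖ * ‖p i‖ := norm_commutator_le _ _
        _ ≤ 2 * ‖y - z‖ * C := by gcongr; exact hC _ (Set.mem_range_self i)
        _ = 2 * C * ‖y - z‖ := by ring
  have equicontinuous := (LipschitzWith.uniformEquicontinuous _ _ lipschitz).equicontinuous
  exact equicontinuous.isClosed_setOfPred_tendsto continuous_const

theorem tendsto_norm_commutator_of_mem_elemental [SeminormedRing A] [StarRing A]
    [ContinuousStar A] [Algebra R A] [StarModule R A] {l : Filter ι} {p : ι → A}
    (hp : ∀ i, IsSelfAdjoint (p i)) (hbdd : Bornology.IsBounded (Set.range p)) {x y : A}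
    (hx : Tendsto (fun i => ‖⁅x, p i⁆‖) l (𝓝 0)) (hy : y ∈ StarAlgebra.elemental R x) :
    Tendsto (fun i => ‖⁅y, p i⁆‖) l (𝓝 0) := by
  have hle : StarAlgebra.elemental R x ≤ asymptoticCommutant R l p hp :=
    (StarAlgebra.elemental.le_iff_mem (isClosed_asymptoticCommutant R l hp hbdd)).2
      (tendsto_zero_iff_norm_tendsto_zero.2 hx)
  exact tendsto_zero_iff_norm_tendsto_zero.1 (hle hy)

end AsymptoticCommutant

theorem mem_closure_red_iff_asymptotically_commuting_projections_general
    (R : Type*) {A : Type*} [CommSemiring R] [StarRing R] [NormedRing A] [StarRing A] [CStarRing A]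
    [Algebra R A] [StarModule R A] {t : A →+ ℝ} (ht1 : t 1 = 1)
    (htpos : ∀ p, IsStarProjection p → p ≠ 0 → 0 < t p) (x : A) :
    [x ∈ closure (RedSet A),
      ∃ p : ℕ → A, (∀ n, IsStarProjection (p n) ∧ 0 < t (p n) ∧ t (p n) ≤ 1 / 2) ∧
        Tendsto (fun n => ‖⁅x, p n⁆‖) atTop (𝓝 0),
      ∃ p : ℕ → A, (∀ n, IsStarProjection (p n) ∧ 0 < t (p n) ∧ t (p n) ≤ 1 / 2) ∧
        ∀ y ∈ StarAlgebra.elemental R x,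
          Tendsto (fun n => ‖⁅y, p n⁆‖) atTop (𝓝 0)].TFAE := by
  rw [mem_closure_redSet_iff_exists_le_half ht1 htpos]
  tfae_have 1 → 2 := fun h => by
    choose p hproj hpos hhalf hlt using fun n : ℕ => h (1 / (n + 1)) Nat.one_div_pos_of_nat
    exact ⟨p, fun n => ⟨hproj n, hpos n, hhalf n⟩, squeeze_zero (fun _ => norm_nonneg _)
      (fun n => (hlt n).le) tendsto_one_div_add_atTop_nhds_zero_nat⟩
  tfae_have 2 → 3 := fun ⟨p, hp, hx⟩ => by
    have hbdd : Bornology.IsBounded (Set.range p) :=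
      isBounded_iff_forall_norm_le.2 ⟨1, Set.forall_mem_range.2 fun n => (hp n).1.norm_le⟩
    exact ⟨p, hp, fun _ =>
      tendsto_norm_commutator_of_mem_elemental R (fun n => (hp n).1.isSelfAdjoint) hbdd hx⟩
  tfae_have 3 → 1 := fun ⟨p, hp, hy⟩ ε hε => by
    have hx := hy x (StarAlgebra.elemental.self_mem R x)
    obtain ⟨n, hn⟩ := (hx.eventually_lt_const hε).exists
    exact ⟨p n, (hp n).1, (hp n).2.1, (hp n).2.2, hn⟩
  tfae_finish

/-- For `x` in a unital C*-algebra with faithful tracial state `τ`,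
membership in the norm closure of the reducible elements is equivalent to the
existence of a sequence of projections of trace in `(0, 1/2]` asymptotically
commuting with `x` (in operator norm), and also to the existence of such a sequence
asymptotically commuting with every element of `C*(x)`. -/
theorem mem_closure_red_iff_asymptotically_commuting_projections
    {A : Type*} [NormedRing A] [StarRing A] [CStarRing A] [CompleteSpace A]
    [NormedAlgebra ℂ A] [StarModule ℂ A]
    (τ : A →ₗ[ℂ] ℂ)
    (hτ1 : τ 1 = 1)
    (hτpos : ∀ x : A, 0 ≤ (τ (star x * x)).re)
    (hτreal : ∀ x : A, (τ (star x * x)).im = 0)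
    (hτtr : ∀ x y : A, τ (x * y) = τ (y * x))
    (hτfaithful : ∀ x : A, τ (star x * x) = 0 → x = 0)
    (x : A) :
    (x ∈ closure (RedSet A) ↔
      ∃ p : ℕ → A,
        (∀ n, star (p n) = p n ∧ p n * p n = p n ∧
          0 < (τ (p n)).re ∧ (τ (p n)).re ≤ 1 / 2) ∧
        Tendsto (fun n => ‖x * p n - p n * x‖) atTop (𝓝 0)) ∧
    (x ∈ closure (RedSet A) ↔
      ∃ p : ℕ → A,
        (∀ n, star (p n) = p n ∧ p n * p n = p n ∧
          0 < (τ (p n)).re ∧ (τ (p n)).re ≤ 1 / 2) ∧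
        ∀ y ∈ (StarAlgebra.adjoin ℂ {x}).topologicalClosure,
          Tendsto (fun n => ‖y * p n - p n * y‖) atTop (𝓝 0)) := by
  have tfae := mem_closure_red_iff_asymptotically_commuting_projections_general ℂ
    (t := Complex.reAddGroupHom.comp τ.toAddMonoidHom) (by simp [hτ1])
    (fun _ => re_pos_of_isStarProjection hτpos hτreal hτfaithful) x
  simp only [isStarProjection_iff_star_eq_and_mul_self_eq, and_assoc] at tfae
  exact ⟨tfae.out 0 1, tfae.out 0 2⟩
end

section
/- Let B be a unital C*-algebra and n ≥ 1. Let p₁, …, pₙ ∈ B be projections with p_k p_l = 0 for k ≠ l and p₁ + ⋯ + pₙ = 1. For each k let w_k ∈ B be selfadjoint with p_k w_k p_k = w_k, invertible in the corner p_k B p_k (i.e. there is v_k ∈ B with p_k v_k p_k = v_k and w_k v_k = v_k w_k = p_k), and assume the spectra computed in B satisfy σ(w_k) ∩ σ(w_l) ⊆ {0} for k ≠ l. For each k let b_k ∈ B be selfadjoint with p_k b_k p_k = b_k, and assume that every projection q ∈ B with q = p_k q p_k, q w_k = w_k q, and q b_k = b_k q equals 0 or p_k. For 1 ≤ k < l ≤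 n let c_{kl} ∈ B satisfy c_{kl} = p_k c_{kl} p_l, and assume c_{k,k+1} ≠ 0 for 1 ≤ k ≤ n−1. Set y₁ = w₁ + ⋯ + wₙ and y₂ = (b₁ + ⋯ + bₙ) + Σ_{1≤k<l≤n} (c_{kl} + c_{kl}*). Then every projection q ∈ B commuting with y₁ + i y₂ equals 0 or 1. -/
/-!
A projection `q` commuting with `y₁ + i y₂` commutes with `y₁` and `y₂` separately, since `q`, `y₁`
and `y₂` are selfadjoint. Commutation with `y₁ = ∑ w k` makes each block `p k * q * p l` intertwine
`w l` and `w k`; a function equal to the identity on one spectrum and to `0` on the other kills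
that block when `k ≠ l`, because `w k` is invertible in its corner. So `q` is block diagonal, and
each block `q * p k` is `0` or `p k` by irreducibility of the corner. A nonzero block
`p k * y₂ * p l` commutes with `q` and forces the same alternative at `k` and `l`.
-/

section Idempotents

variable {R ι : Type*}

theorem left_mul_eq_of_mul_mul_eq [Semigroup R] {e f x : R} (he : IsIdempotentElem e)
    (hx : e * x * f = x) : e * x = x := by
  rw [← hx, ← mul_assoc, ← mul_assoc, he.eq]

theorem mul_right_eq_of_mul_mul_eq [Semigroup R] {e f x : R} (hf : IsIdempotentElem f)
    (hx : e * x * f = x) : x * f = x := by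
  rw [← hx, mul_assoc, hf.eq]

theorem mul_eq_zero_iff_mul_eq_zero_of_commute [SemigroupWithZero R] {q e f x : R} (hx : x ≠ 0)
    (hex : e * x = x) (hxf : x * f = x) (hqx : Commute q x)
    (hqe : q * e = 0 ∨ q * e = e) (hqf : q * f = 0 ∨ q * f = f) :
    q * e = 0 ↔ q * f = 0 := by
  have left : q * e * x = q * x := by rw [mul_assoc, hex]
  have right : x * (q * f) = q * x := by rw [← mul_assoc, ← hqx.eq, mul_assoc, hxf]
  rcases hqe with h₁ | h₁ <;> rcases hqf with h₂ | h₂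
  · exact iff_of_true h₁ h₂
  · rw [h₁, zero_mul] at left
    rw [h₂, hxf, ← left] at right
    exact absurd right hx
  · rw [h₂, mul_zero] at right
    rw [h₁, hex, ← right] at left
    exact absurd left hx
  · rw [h₁, h₂]
    exact iff_of_false (fun h ↦ hx (by rw [← hex, h, zero_mul]))
      (fun h ↦ hx (by rw [← hxf, h, mul_zero]))

/-- The graph on the index set of a family `e` whose edges are the nonzero off-diagonal blocks
`e k * h * e l` of `h`. It is made undirected by joining `k` and `l` as soon as one of the two
blocks is nonzero. -/
def linkGraph [MulZeroClass R] (e : ι → R) (h : R) : SimpleGraph ι :=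
  .fromRel fun k l ↦ e k * h * e l ≠ 0

theorem linkGraph_preconnected_of_succ [MulZeroClass R] {n : ℕ} {e : Fin n → R} {h : R}
    (hne : ∀ k : Fin n, ∀ hk : (k : ℕ) + 1 < n, e k * h * e ⟨k + 1, hk⟩ ≠ 0) :
    (linkGraph e h).Preconnected := by
  refine (SimpleGraph.pathGraph_preconnected n).mono fun k l hkl ↦ ⟨hkl.ne, ?_⟩
  rcases SimpleGraph.pathGraph_adj.mp hkl with hl | hk
  · have hl' : ⟨k + 1, hl ▸ l.2⟩ = l := Fin.ext hl
    exact .inl (hl' ▸ hne k _)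
  · have hk' : ⟨l + 1, hk ▸ k.2⟩ = k := Fin.ext hk
    exact .inr (hk' ▸ hne l _)

section Semiring

variable [Semiring R] {e : ι → R}

theorem mul_eq_zero_iff_of_linkGraph_adj (he : OrthogonalIdempotents e) {q h : R}
    (hqe : ∀ k, Commute q (e k)) (hqh : Commute q h)
    (hq : ∀ k, q * e k = 0 ∨ q * e k = e k) {k l : ι} (hkl : (linkGraph e h).Adj k l) :
    q * e k = 0 ↔ q * e l = 0 := by
  have of_block_ne_zero : ∀ i j, e i * h * e j ≠ 0 → (q * e i = 0 ↔ q * e j = 0) := fun i j hij ↦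
    mul_eq_zero_iff_mul_eq_zero_of_commute hij
      (by rw [← mul_assoc, ← mul_assoc, (he.idem i).eq]) (by rw [mul_assoc, (he.idem j).eq])
      (((hqe i).mul_right hqh).mul_right (hqe j)) (hq i) (hq j)
  rcases hkl.2 with hkl | hlk
  · exact of_block_ne_zero k l hkl
  · exact (of_block_ne_zero l k hlk).symm

variable [Fintype ι]

theorem eq_zero_or_eq_one_of_linkGraph_preconnected (he : CompleteOrthogonalIdempotents e)
    {q h : R} (hG : (linkGraph e h).Preconnected) (hqe : ∀ k, Commute q (e k))
    (hqh : Commute q h) (hq : ∀ k, q * e k = 0 ∨ q * e k = e k) : q = 0 ∨ q = 1 := by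
  have hsum : q = ∑ k, q * e k := by rw [← Finset.mul_sum, he.complete, mul_one]
  have hiff (k l : ι) : q * e k = 0 ↔ q * e l = 0 := by
    obtain ⟨path⟩ := hG k l
    induction path with
    | nil => rfl
    | cons hadj _ ih =>
      exact (mul_eq_zero_iff_of_linkGraph_adj he.toOrthogonalIdempotents hqe hqh hq hadj).trans ih
  by_cases h0 : ∀ k, q * e k = 0
  · exact .inl (hsum.trans (Finset.sum_eq_zero fun k _ ↦ h0 k))
  · obtain ⟨k, hk⟩ := not_forall.mp h0
    refine .inr (hsum.trans (he.complete ▸ Finset.sum_congr rfl fun l _ ↦ ?_))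
    exact (hq l).resolve_left fun hl ↦ hk ((hiff k l).mpr hl)

theorem commute_of_offDiagonal_eq_zero (he : CompleteOrthogonalIdempotents e) {q : R}
    (hq : ∀ k l, k ≠ l → e k * q * e l = 0) (k : ι) : Commute q (e k) := by
  calc q * e k = ∑ j, e j * q * e k := by
        simp only [mul_assoc, ← Finset.sum_mul, he.complete, one_mul]
    _ = e k * q * e k := Fintype.sum_eq_single k fun j hj ↦ hq j k hj
    _ = ∑ j, e k * q * e j := (Fintype.sum_eq_single k fun j hj ↦ hq k j hj.symm).symm
    _ = e k * q := by rw [← Finset.mul_sum, he.complete, mul_one]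

theorem mul_sum_sum_mul_of_blocks (he : OrthogonalIdempotents e) {d : ι → ι → R}
    (hd : ∀ i j, e i * d i j * e j = d i j) (k l : ι) : e k * (∑ i, ∑ j, d i j) * e l = d k l := by
  have hblock (i j : ι) (hij : ¬(i = k ∧ j = l)) : e k * d i j * e l = 0 := by
    rw [← hd i j]
    by_cases hi : i = k
    · rw [mul_assoc, mul_assoc, he.ortho fun hj ↦ hij ⟨hi, hj⟩, mul_zero, mul_zero]
    · simp only [← mul_assoc, he.ortho (Ne.symm hi), zero_mul]
  simp only [Finset.mul_sum, Finset.sum_mul]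
  rw [Fintype.sum_eq_single k fun i hi ↦ Finset.sum_eq_zero fun j _ ↦ hblock i j fun h ↦ hi h.1,
    Fintype.sum_eq_single l fun j hj ↦ hblock k j fun h ↦ hj h.2, hd]

theorem mul_sum_of_corner (he : OrthogonalIdempotents e) {d : ι → R}
    (hd : ∀ k, e k * d k * e k = d k) (k : ι) : e k * ∑ j, d j = d k := by
  rw [Finset.mul_sum, Fintype.sum_eq_single k, left_mul_eq_of_mul_mul_eq (he.idem k) (hd k)]
  intro j hj
  rw [← left_mul_eq_of_mul_mul_eq (he.idem j) (hd j), ← mul_assoc, he.ortho hj.symm, zero_mul]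

theorem sum_mul_of_corner (he : OrthogonalIdempotents e) {d : ι → R}
    (hd : ∀ k, e k * d k * e k = d k) (k : ι) : (∑ j, d j) * e k = d k := by
  rw [Finset.sum_mul, Fintype.sum_eq_single k, mul_right_eq_of_mul_mul_eq (he.idem k) (hd k)]
  intro j hj
  rw [← mul_right_eq_of_mul_mul_eq (he.idem j) (hd j), mul_assoc, he.ortho hj, mul_zero]

end Semiring

end Idempotents

section LinkedSum

variable {R ι : Type*} [Fintype ι]

theorem isSelfAdjoint_sum_add_star [LT ι] [DecidableLT ι] [AddCommMonoid R] [StarAddMonoid R]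
    (c : ι → ι → R) :
    IsSelfAdjoint (∑ k, ∑ l, if k < l then c k l + star (c k l) else 0) := by
  refine isSelfAdjoint_sum _ fun k _ ↦ isSelfAdjoint_sum _ fun l _ ↦ ?_
  split_ifs
  · exact .add_star_self _
  · exact .zero _

variable [LinearOrder ι]

theorem sum_add_sum_add_star_eq_sum_blocks [AddCommMonoid R] [Star R] (b : ι → R)
    (c : ι → ι → R) :
    (∑ k, b k) + ∑ k, ∑ l, (if k < l then c k l + star (c k l) else 0) =
      ∑ k, ∑ l, if k < l then c k l else if l < k then star (c l k) else b k := by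
  have split (k l : ι) : (if k < l then c k l else if l < k then star (c l k) else b k) =
      (if k = l then b k else 0) + ((if k < l then c k l else 0) +
        if l < k then star (c l k) else 0) := by
    rcases lt_trichotomy k l with h | rfl | h
    · simp [h, h.ne, h.not_gt]
    · simp
    · simp [h, h.ne', h.not_gt]
  have split_link (k l : ι) : (if k < l then c k l + star (c k l) else 0) =
      (if k < l then c k l else 0) + if k < l then star (c k l) else 0 := by
    split_ifs <;> simp
  simp only [split, split_link, Finset.sum_add_distrib, Finset.sum_ite_eq, Finset.mem_univ, if_true]
  rw [Finset.sum_comm (f := fun k l ↦ if k < l then star (c k l) else 0)]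

theorem mul_sum_add_sum_add_star_mul [Semiring R] [StarRing R] {e : ι → R}
    (he : OrthogonalIdempotents e) (he_sa : ∀ k, IsSelfAdjoint (e k)) {b : ι → R}
    (hb : ∀ k, e k * b k * e k = b k) {c : ι → ι → R}
    (hc : ∀ k l, k < l → e k * c k l * e l = c k l) (k l : ι) :
    e k * ((∑ k, b k) + ∑ k, ∑ l, if k < l then c k l + star (c k l) else 0) * e l =
      if k < l then c k l else if l < k then star (c l k) else b k := by
  rw [sum_add_sum_add_star_eq_sum_blocks, mul_sum_sum_mul_of_blocks he]
  intro i j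
  split_ifs with hij hji
  · exact hc i j hij
  · conv_rhs => rw [← hc j i hji]
    simp only [star_mul, (he_sa _).star_eq, mul_assoc]
  · obtain rfl : i = j := le_antisymm (not_lt.mp hji) (not_lt.mp hij)
    exact hb i

end LinkedSum

section Irreducible

variable {R : Type*}

/-- Irreducibility of the pair `x`, `y` in the corner of the projection `e`: the only projections
of that corner commuting with both are `0` and its unit `e`. -/
def IsIrreducibleInCorner [Mul R] [Zero R] [Star R] (e x y : R) : Prop :=
  ∀ q : R, IsStarProjection q → e * q * e = q → Commute q x → Commute q y → q = 0 ∨ q = e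

theorem mul_eq_zero_or_eq_of_isIrreducibleInCorner [NonUnitalSemiring R] [StarRing R]
    {e x h q : R} (hirr : IsIrreducibleInCorner e x (e * h * e)) (he : IsStarProjection e)
    (hq : IsStarProjection q) (hqe : Commute q e) (hx : e * x * e = x) (hqx : Commute q x)
    (hqh : Commute q h) : q * e = 0 ∨ q * e = e := by
  have hee : e * e = e := he.isIdempotentElem
  have hex : Commute e x :=
    (left_mul_eq_of_mul_mul_eq hee hx).trans (mul_right_eq_of_mul_mul_eq hee hx).symm
  have heh : Commute e (e * h * e) := by
    rw [Commute, SemiconjBy, ← mul_assoc, ← mul_assoc, hee, mul_assoc _ e e, hee]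
  have hcorner : e * (q * e) * e = q * e := by
    rw [mul_assoc, mul_assoc, hee, ← mul_assoc, ← hqe.eq, mul_assoc, hee]
  exact hirr (q * e) (hq.mul he hqe) hcorner (hqx.mul_left hex)
    (((hqe.mul_right hqh).mul_right hqe).mul_left heh)

end Irreducible

section StarAlgebra

open scoped ComplexStarModule

variable {A : Type*} [NonUnitalRing A] [StarRing A] [Module ℂ A] [StarModule ℂ A]
  [IsScalarTower ℂ A A] [SMulCommClass ℂ A A]

theorem commute_realPart {q y : A} (hq : IsSelfAdjoint q) (hqy : Commute q y) :
    Commute q (ℜ y : A) := by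
  have hqy' : Commute q (star y) := hq.star_eq ▸ hqy.star_star
  rw [realPart_apply_coe]
  exact (hqy.add_right hqy').smul_right _

theorem commute_and_commute_of_commute_add_I_smul {q a h : A} (hq : IsSelfAdjoint q)
    (ha : IsSelfAdjoint a) (hh : IsSelfAdjoint h) (hqy : Commute q (a + Complex.I • h)) :
    Commute q a ∧ Commute q h := by
  have hre : (ℜ (a + Complex.I • h) : A) = a := by
    rw [map_add, realPart_I_smul, hh.imaginaryPart, neg_zero, add_zero, ha.coe_realPart]
  have hqa : Commute q a := hre ▸ commute_realPart hq hqy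
  refine ⟨hqa, ?_⟩
  have hqIh : Commute q (Complex.I • h) := by simpa using hqy.sub_right hqa
  exact (Commute.smul_right_iff₀ Complex.I_ne_zero).mp hqIh

end StarAlgebra

section CStarAlgebra

variable {A : Type*} [CStarAlgebra A]

-- The pairs `(u, v)` with `x * u = v * x` form a closed subalgebra of `A × A`, which by
-- Fuglede–Putnam contains the star of `(a, b)`, so it is closed under functional calculus.
theorem semiconjBy_cfc {a b x : A} (ha : IsStarNormal a) (hb : IsStarNormal b)
    (h : SemiconjBy x a b) {f : ℂ → ℂ} (hf : ContinuousOn f (spectrum ℂ a ∪ spectrum ℂ b)) :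
    SemiconjBy x (cfc f a) (cfc f b) := by
  have hab : IsStarNormal (a, b) := ⟨Prod.ext ha.star_comm_self hb.star_comm_self⟩
  have hstar : SemiconjBy x (star a) (star b) := h.star_right ha hb
  suffices hhom : ∀ g : C(spectrum ℂ (a, b), ℂ),
      SemiconjBy x (cfcHom hab g).1 (cfcHom hab g).2 by
    have hfab : ContinuousOn f (spectrum ℂ (a, b)) := by rwa [Prod.spectrum_eq]
    have hprod := cfc_map_prod (S := ℂ) f a b hf
    rw [cfc_apply f (a, b)] at hprod
    simpa only [hprod] using hhom ⟨_, hfab.domRestrict⟩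
  intro g
  induction g using ContinuousMap.induction_on_of_compact with
  | const r =>
    have hr : cfcHom hab (.const _ r) = algebraMap ℂ (A × A) r :=
      AlgHomClass.commutes (cfcHom hab) r
    rw [hr]
    exact (Algebra.commutes r x).symm
  | id => rwa [cfcHom_id hab]
  | star_id => rwa [map_star, cfcHom_id hab]
  | add g₁ g₂ h₁ h₂ =>
    rw [map_add]
    exact h₁.add_right h₂
  | mul g₁ g₂ h₁ h₂ =>
    rw [map_mul]
    exact h₁.mul_right h₂
  | frequently g hg =>
    have hclosed : IsClosed {z : A × A | SemiconjBy x z.1 z.2} :=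
      isClosed_eq (by fun_prop) (by fun_prop)
    exact hclosed.mem_of_frequently_of_tendsto hg ((cfcHom_continuous hab).tendsto g)

theorem mul_eq_zero_of_semiconjBy_of_spectrum_inter_subset {a b x : A} (ha : IsStarNormal a)
    (hb : IsStarNormal b) (h : SemiconjBy x a b) (hs : spectrum ℂ a ∩ spectrum ℂ b ⊆ {0}) :
    x * a = 0 := by
  classical
  let f : ℂ → ℂ := fun z ↦ if z ∈ spectrum ℂ b then 0 else z
  have hfa : (spectrum ℂ a).EqOn f id := fun z hza ↦ by
    by_cases hzb : z ∈ spectrum ℂ b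
    · exact (if_pos hzb).trans (hs ⟨hza, hzb⟩).symm
    · exact if_neg hzb
  have hfb : (spectrum ℂ b).EqOn f fun _ ↦ 0 := fun z hzb ↦ if_pos hzb
  have hf : ContinuousOn f (spectrum ℂ a ∪ spectrum ℂ b) :=
    (continuousOn_id.congr hfa).union_of_isClosed (continuousOn_const.congr hfb)
      (spectrum.isClosed a) (spectrum.isClosed b)
  have key := (semiconjBy_cfc ha hb h hf).eq
  rwa [cfc_congr hfa, cfc_congr hfb, cfc_id ℂ a, cfc_const_zero, zero_mul] at key

theorem mul_mul_eq_zero_of_commute_of_spectrum_inter_subset {e f a q : A}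
    (he : IsIdempotentElem e) (hf : IsIdempotentElem f) (hea : Commute e a) (hfa : Commute f a)
    (hqa : Commute q a) (hae : IsStarNormal (a * e)) (haf : IsStarNormal (a * f))
    (hinv : ∃ v, v * (a * e) = e) (hs : spectrum ℂ (a * f) ∩ spectrum ℂ (a * e) ⊆ {0}) :
    e * q * f = 0 := by
  have hsupp : SemiconjBy (e * q * f) f e := by
    rw [SemiconjBy, mul_assoc, hf.eq, ← mul_assoc, ← mul_assoc, he.eq]
  have hintertwine : SemiconjBy (e * q * f) (a * f) (a * e) :=
    .mul_right ((hea.mul_left hqa).mul_left hfa) hsupp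
  have hzero := mul_eq_zero_of_semiconjBy_of_spectrum_inter_subset haf hae hintertwine hs
  rw [hintertwine.eq] at hzero
  obtain ⟨v, hv⟩ := hinv
  calc e * q * f = e * (e * q * f) := by rw [← mul_assoc, ← mul_assoc, he.eq]
    _ = v * (a * e * (e * q * f)) := by rw [← mul_assoc v, hv]
    _ = 0 := by rw [hzero, mul_zero]

theorem commute_of_commute_sum_of_spectrum_inter_subset {ι : Type*} [Fintype ι] {p w : ι → A}
    (hp : CompleteOrthogonalIdempotents p) (hw : ∀ k, IsStarNormal (w k))
    (hw_corner : ∀ k, p k * w k * p k = w k) (hw_inv : ∀ k, ∃ v, v * w k = p k)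
    (hw_spec : ∀ k l, k ≠ l → spectrum ℂ (w k) ∩ spectrum ℂ (w l) ⊆ {0})
    {q : A} (hq : Commute q (∑ k, w k)) (k : ι) : Commute q (p k) := by
  have sum_mul := sum_mul_of_corner hp.toOrthogonalIdempotents hw_corner
  have hpw (k) : Commute (p k) (∑ j, w j) :=
    (mul_sum_of_corner hp.toOrthogonalIdempotents hw_corner k).trans (sum_mul k).symm
  refine commute_of_offDiagonal_eq_zero hp (fun i j hij ↦ ?_) k
  apply mul_mul_eq_zero_of_commute_of_spectrum_inter_subset (hp.idem i) (hp.idem j)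
    (hpw i) (hpw j) hq <;> simp only [sum_mul]
  exacts [hw i, hw j, hw_inv i, hw_spec j i hij.symm]

end CStarAlgebra

theorem no_nontrivial_commuting_projection_of_linked_corners_general
    {B ι : Type*} [CStarAlgebra B] [Fintype ι] {p w : ι → B} {h : B}
    (hp : CompleteOrthogonalIdempotents p) (hp_sa : ∀ k, IsSelfAdjoint (p k))
    (hw_sa : ∀ k, IsSelfAdjoint (w k)) (hw_corner : ∀ k, p k * w k * p k = w k)
    (hw_inv : ∀ k, ∃ v, v * w k = p k)
    (hw_spec : ∀ k l, k ≠ l → spectrum ℂ (w k) ∩ spectrum ℂ (w l) ⊆ {0})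
    (hh_sa : IsSelfAdjoint h)
    (h_irr : ∀ k, IsIrreducibleInCorner (p k) (w k) (p k * h * p k))
    (h_link : (linkGraph p h).Preconnected)
    {q : B} (hq : IsStarProjection q) (hqy : Commute q ((∑ k, w k) + Complex.I • h)) :
    q = 0 ∨ q = 1 := by
  obtain ⟨hqa, hqh⟩ := commute_and_commute_of_commute_add_I_smul hq.isSelfAdjoint
    (isSelfAdjoint_sum _ fun k _ ↦ hw_sa k) hh_sa hqy
  have hqp : ∀ k, Commute q (p k) := commute_of_commute_sum_of_spectrum_inter_subset hp
    (fun k ↦ (hw_sa k).isStarNormal) hw_corner hw_inv hw_spec hqa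
  have hqw (k : ι) : Commute q (w k) :=
    mul_sum_of_corner hp.toOrthogonalIdempotents hw_corner k ▸ (hqp k).mul_right hqa
  exact eq_zero_or_eq_one_of_linkGraph_preconnected hp h_link hqp hqh fun k ↦
    mul_eq_zero_or_eq_of_isIrreducibleInCorner (h_irr k) ⟨hp.idem k, hp_sa k⟩ hq (hqp k)
      (hw_corner k) (hqw k) hqh

/-- An element `y₁ + i y₂` built from corner-irreducible selfadjoint
pieces with pairwise almost-disjoint spectra, joined by nonzero off-diagonal
connectors, commutes with no nontrivial projection. -/
theorem no_nontrivial_commuting_projection_of_linked_corners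
    {B : Type*} [NormedRing B] [StarRing B] [CStarRing B] [CompleteSpace B]
    [NormedAlgebra ℂ B] [StarModule ℂ B]
    (n : ℕ) (hn : 1 ≤ n) (p : Fin n → B)
    (hp_sa : ∀ k, star (p k) = p k)
    (hp_idem : ∀ k, p k * p k = p k)
    (hp_orth : ∀ k l, k ≠ l → p k * p l = 0)
    (hp_sum : ∑ k, p k = 1)
    (w : Fin n → B)
    (hw_sa : ∀ k, star (w k) = w k)
    (hw_corner : ∀ k, p k * w k * p k = w k)
    (hw_inv : ∀ k, ∃ v : B, p k * v * p k = v ∧ w k * v = p k ∧ v * w k = p k)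
    (hw_spec : ∀ k l, k ≠ l → spectrum ℂ (w k) ∩ spectrum ℂ (w l) ⊆ {0})
    (b : Fin n → B)
    (hb_sa : ∀ k, star (b k) = b k)
    (hb_corner : ∀ k, p k * b k * p k = b k)
    (h_irr : ∀ k, ∀ q : B, star q = q → q * q = q → q = p k * q * p k →
      q * w k = w k * q → q * b k = b k * q → q = 0 ∨ q = p k)
    (c : Fin n → Fin n → B)
    (hc_corner : ∀ k l, k < l → c k l = p k * c k l * p l)
    (hc_ne : ∀ k : Fin n, ∀ h : (k : ℕ) + 1 < n, c k ⟨(k : ℕ) + 1, h⟩ ≠ 0) :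
    ∀ q : B, star q = q → q * q = q →
      q * ((∑ k, w k) + Complex.I •
          ((∑ k, b k) + ∑ k, ∑ l, if k < l then c k l + star (c k l) else 0)) =
        ((∑ k, w k) + Complex.I •
          ((∑ k, b k) + ∑ k, ∑ l, if k < l then c k l + star (c k l) else 0)) * q →
      q = 0 ∨ q = 1 := by
  let _ : CStarAlgebra B := { }
  have hp : CompleteOrthogonalIdempotents p := ⟨⟨hp_idem, hp_orth⟩, hp_sum⟩
  have hblock := mul_sum_add_sum_add_star_mul hp.toOrthogonalIdempotents hp_sa hb_corner
    fun k l hkl ↦ (hc_corner k l hkl).symm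
  intro q hq_sa hq_idem hqy
  refine no_nontrivial_commuting_projection_of_linked_corners_general
    hp hp_sa hw_sa hw_corner (fun k ↦ (hw_inv k).imp fun _ hv ↦ hv.2.2) hw_spec
    ((isSelfAdjoint_sum _ fun k _ ↦ hb_sa k).add (isSelfAdjoint_sum_add_star c)) ?_ ?_
    ⟨hq_idem, hq_sa⟩ hqy
  · intro k r hr hrk hrw hrb
    rw [hblock, if_neg (lt_irrefl k), if_neg (lt_irrefl k)] at hrb
    exact h_irr k r hr.isSelfAdjoint hr.isIdempotentElem hrk.symm hrw hrb
  · refine linkGraph_preconnected_of_succ fun k hk ↦ ?_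
    rw [hblock, if_pos (Fin.lt_def.mpr k.val.lt_succ_self)]
    exact hc_ne k hk
end
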